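/- Let s > 2 and set ψ_max := arccos(2/s) ∈ (0, π/2). Consider Arg(C_s(ψ)) ∈ [0,π], the unique τ with cos τ = (−s/2 + cos ψ)/|C_s(ψ)|. Then: (i) Arg(C_s(0)) = Arg(C_s(π)) = π; (ii) ψ ↦ Arg(C_s(ψ)) is strictly decreasing on [0, ψ_max] and strictly increasing on [ψ_max, π]; (iii) Arg(C_s(ψ_max)) = ψ_max + π/2; and (iv) cos(Arg(C_s(ψ_max))) = −sqrt(1 − 4/s²), so that min over ψ ∈ [0,π] of |cos(Arg(C_s(ψ)))| equals sqrt(1 − 4/s²) and is attained exactly at ψ = ψ_max. -/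

import Mathlib

noncomputable section

open scoped Real

/-- Hermitian product on `ℂ^{n+1}`, ℂ-linear in the first argument and
conjugate-linear in the second (paper convention). -/
def herm {n : ℕ} (x y : EuclideanSpace ℂ (Fin (n + 1))) : ℂ := inner ℂ y x

/-- Norm of the point `C_s(ψ) = (−s/2 + cos ψ, sin ψ) ∈ ℝ²`, i.e.
`|C_s(ψ)| = sqrt(s²/4 + 1 − s cos ψ)`. -/
def normC (s ψ : ℝ) : ℝ := Real.sqrt (s ^ 2 / 4 + 1 - s * Real.cos ψ)

/-- Angle of `C_s(ψ)` with the positive x-axis: the unique `τ ∈ [0,π]` with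
`cos τ = (−s/2 + cos ψ)/|C_s(ψ)|`. -/
def argC (s ψ : ℝ) : ℝ := Real.arccos ((-s / 2 + Real.cos ψ) / normC s ψ)

/-- `γ` is a unit-speed magnetic geodesic of strength `s` with contact angle `ψ`,
in the paper's ambient-space formulation: `γ'' − i·s·γ' + (1 − s·cos ψ)·γ = 0`,
`|γ(0)| = 1`, `|γ'(0)| = 1`, `Re⟨γ(0),γ'(0)⟩ = 0`, `Re⟨i·γ(0),γ'(0)⟩ = cos ψ`. -/
def IsMagGeo {n : ℕ} (s ψ : ℝ) (γ : ℝ → EuclideanSpace ℂ (Fin (n + 1))) : Prop :=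
  ContDiff ℝ (⊤ : ℕ∞) γ ∧
  (∀ t : ℝ, deriv (deriv γ) t - ((s : ℂ) * Complex.I) • deriv γ t
      + ((1 : ℂ) - (s : ℂ) * (Real.cos ψ : ℂ)) • γ t = 0) ∧
  ‖γ 0‖ = 1 ∧ ‖deriv γ 0‖ = 1 ∧ (herm (γ 0) (deriv γ 0)).re = 0 ∧
  (herm (Complex.I • γ 0) (deriv γ 0)).re = Real.cos ψ

/-- The curve `γ(t) = e^{i s t/2}(e^{−i|C_s(ψ)|t} w₀ + e^{i|C_s(ψ)|t} w₁)`. -/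
def magCurve {n : ℕ} (s ψ : ℝ) (w₀ w₁ : EuclideanSpace ℂ (Fin (n + 1))) (t : ℝ) :
    EuclideanSpace ℂ (Fin (n + 1)) :=
  Complex.exp (Complex.I * s * t / 2) •
    (Complex.exp (-(Complex.I * normC s ψ * t)) • w₀ +
     Complex.exp (Complex.I * normC s ψ * t) • w₁)

/-- The Clifford torus `𝕋²_{w₀,w₁} = {λ₀ w₀ + λ₁ w₁ : |λ₀| = |λ₁| = 1}`. -/
def cliffordTorus {n : ℕ} (w₀ w₁ : EuclideanSpace ℂ (Fin (n + 1))) :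
    Set (EuclideanSpace ℂ (Fin (n + 1))) :=
  {x | ∃ l₀ l₁ : ℂ, ‖l₀‖ = 1 ∧ ‖l₁‖ = 1 ∧ x = l₀ • w₀ + l₁ • w₁}

/-! The points `C_s(ψ)` trace the upper half of the unit circle centred at `(-s/2, 0)`, and for
`s > 2` the origin lies outside that circle, with power `p = s²/4 - 1`. The line through the origin
and `C_s(ψ)` therefore meets the circle at distances `N = |C_s(ψ)|` and `p / N` from the origin. The
midpoint of this chord is the foot of the perpendicular from the centre, so
`-cos Arg(C_s(ψ)) · s/2 = (N + p / N) / 2`. As `N` increases with `ψ`, everything follows from the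
behaviour of `x + p / x`, which is least at `x = √p`: there the line is tangent, and `ψ = ψ_max`. -/

section AddDiv

variable {c x y : ℝ}

theorem add_div_sub_add_div (hx : x ≠ 0) (hy : y ≠ 0) :
    (y + c / y) - (x + c / x) = (y - x) * (x * y - c) / (x * y) := by
  field_simp
  ring

theorem strictAntiOn_add_div : StrictAntiOn (fun x => x + c / x) (Set.Ioc 0 √c) := by
  intro x hx y hy hxy
  have hmul : x * y < c := calc
    x * y < y * y := mul_lt_mul_of_pos_right hxy hy.1
    _ ≤ c := by simpa only [sq] using (Real.le_sqrt' hy.1).1 hy.2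
  have hneg : (y - x) * (x * y - c) / (x * y) < 0 :=
    div_neg_of_neg_of_pos (mul_neg_of_pos_of_neg (sub_pos.2 hxy) (sub_neg.2 hmul))
      (mul_pos hx.1 hy.1)
  rwa [← add_div_sub_add_div hx.1.ne' hy.1.ne', sub_neg] at hneg

theorem strictMonoOn_add_div (hc : 0 < c) :
    StrictMonoOn (fun x => x + c / x) (Set.Ici √c) := by
  intro x hx y _ hxy
  have hx₀ : 0 < x := (Real.sqrt_pos.2 hc).trans_le hx
  have hy₀ : 0 < y := hx₀.trans hxy
  have hmul : c < x * y := calc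
    c ≤ x * x := by simpa only [sq] using (Real.sqrt_le_left hx₀.le).1 hx
    _ < x * y := mul_lt_mul_of_pos_left hxy hx₀
  have hpos : 0 < (y - x) * (x * y - c) / (x * y) :=
    div_pos (mul_pos (sub_pos.2 hxy) (sub_pos.2 hmul)) (mul_pos hx₀ hy₀)
  rwa [← add_div_sub_add_div hx₀.ne' hy₀.ne', sub_pos] at hpos

end AddDiv

/-- The sum `N + p / N`, where `N = |C_s(ψ)|` and `p = s²/4 - 1` is the power of the origin with
respect to the unit circle centred at `(-s/2, 0)`. For `s > 2` these are the distances from the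
origin to the two points where the line through the origin and `C_s(ψ)` meets that circle. -/
def secantSum (s ψ : ℝ) : ℝ := normC s ψ + (s ^ 2 / 4 - 1) / normC s ψ

section Circle

open Real Set

variable {s ψ φ : ℝ}

theorem normC_eq_sqrt_sq_add_sq (s ψ : ℝ) :
    normC s ψ = √((-s / 2 + cos ψ) ^ 2 + sin ψ ^ 2) := by
  rw [normC, sin_sq]
  ring_nf

theorem normC_sq (s ψ : ℝ) : normC s ψ ^ 2 = s ^ 2 / 4 + 1 - s * cos ψ := by
  rw [normC_eq_sqrt_sq_add_sq, sq_sqrt (add_nonneg (sq_nonneg _) (sq_nonneg _)), sin_sq]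
  ring

theorem normC_pos (hs : 2 < s) (ψ : ℝ) : 0 < normC s ψ := by
  have hgap : 0 < s / 2 - 1 := by linarith
  have hcos : 0 ≤ s * (1 - cos ψ) := mul_nonneg (by linarith) (sub_nonneg.2 (cos_le_one ψ))
  have hsplit : s ^ 2 / 4 + 1 - s * cos ψ = (s / 2 - 1) ^ 2 + s * (1 - cos ψ) := by ring
  rw [normC, hsplit]
  exact sqrt_pos.2 (add_pos_of_pos_of_nonneg (pow_pos hgap 2) hcos)

theorem normC_zero (s : ℝ) : normC s 0 = |s / 2 - 1| := by
  rw [normC, cos_zero, ← sqrt_sq_eq_abs]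
  ring_nf

theorem normC_pi (s : ℝ) : normC s π = |s / 2 + 1| := by
  rw [normC, cos_pi, ← sqrt_sq_eq_abs]
  ring_nf

theorem strictMonoOn_normC (hs : 0 < s) : StrictMonoOn (normC s) (Icc 0 π) := by
  intro x hx y hy hxy
  have hcos : s * cos y < s * cos x := mul_lt_mul_of_pos_left (strictAntiOn_cos hx hy hxy) hs
  refine lt_of_pow_lt_pow_left₀ 2 (sqrt_nonneg _) ?_
  rw [normC_sq, normC_sq]
  linarith

theorem abs_neg_half_add_cos_le_normC (s ψ : ℝ) : |-s / 2 + cos ψ| ≤ normC s ψ := by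
  rw [normC_eq_sqrt_sq_add_sq]
  exact abs_le_sqrt (le_add_of_nonneg_right (sq_nonneg _))

theorem cos_argC (s ψ : ℝ) : cos (argC s ψ) = (-s / 2 + cos ψ) / normC s ψ := by
  have habs : |(-s / 2 + cos ψ) / normC s ψ| ≤ 1 := by
    rw [abs_div]
    exact div_le_one_of_le₀ ((abs_neg_half_add_cos_le_normC s ψ).trans (le_abs_self _))
      (abs_nonneg _)
  exact cos_arccos (neg_le_of_abs_le habs) (le_of_abs_le habs)

theorem cos_argC_eq_neg_secantSum_div (hs : s ≠ 0) (hN : normC s ψ ≠ 0) :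
    cos (argC s ψ) = -(secantSum s ψ / s) := by
  rw [cos_argC, secantSum]
  field_simp
  linear_combination 8 * normC_sq s ψ

theorem argC_mem_Icc (s ψ : ℝ) : argC s ψ ∈ Icc 0 π :=
  ⟨arccos_nonneg _, arccos_le_pi _⟩

theorem argC_lt_argC_iff (hs : 2 < s) :
    argC s ψ < argC s φ ↔ secantSum s ψ < secantSum s φ := by
  have hs₀ : 0 < s := two_pos.trans hs
  rw [← strictAntiOn_cos.lt_iff_gt (argC_mem_Icc s φ) (argC_mem_Icc s ψ),
    cos_argC_eq_neg_secantSum_div hs₀.ne' (normC_pos hs φ).ne',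
    cos_argC_eq_neg_secantSum_div hs₀.ne' (normC_pos hs ψ).ne',
    neg_lt_neg_iff, div_lt_div_iff_of_pos_right hs₀]

theorem argC_zero (hs : 2 < s) : argC s 0 = π := by
  have hpos : 0 < s / 2 - 1 := by linarith
  have hcos : (-s / 2 + 1) / (s / 2 - 1) = -1 := by
    rw [div_eq_iff hpos.ne']
    ring
  rw [argC, normC_zero, abs_of_pos hpos, cos_zero, hcos, arccos_neg_one]

theorem argC_pi (hs : -2 < s) : argC s π = π := by
  have hpos : 0 < s / 2 + 1 := by linarith
  have hcos : (-s / 2 + -1) / (s / 2 + 1) = -1 := by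
    rw [div_eq_iff hpos.ne']
    ring
  rw [argC, normC_pi, abs_of_pos hpos, cos_pi, hcos, arccos_neg_one]

theorem arccos_two_div_mem_Ioo (hs : 2 < s) : arccos (2 / s) ∈ Ioo 0 (π / 2) := by
  have hs₀ : 0 < s := two_pos.trans hs
  exact ⟨arccos_pos.2 ((div_lt_one hs₀).2 hs), arccos_lt_pi_div_two.2 (div_pos two_pos hs₀)⟩

theorem arccos_mem_Icc (x : ℝ) : arccos x ∈ Icc 0 π :=
  ⟨arccos_nonneg x, arccos_le_pi x⟩

theorem normC_arccos_two_div (hs : 2 ≤ s) : normC s (arccos (2 / s)) = √(s ^ 2 / 4 - 1) := by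
  have hs₀ : 0 < s := two_pos.trans_le hs
  have hneg : -1 ≤ 2 / s := neg_one_lt_zero.le.trans (div_pos two_pos hs₀).le
  rw [normC, cos_arccos hneg ((div_le_one hs₀).2 hs), mul_div_cancel₀ _ hs₀.ne']
  ring_nf

theorem secantSum_arccos_two_div (hs : 2 ≤ s) :
    secantSum s (arccos (2 / s)) = 2 * √(s ^ 2 / 4 - 1) := by
  rw [secantSum, normC_arccos_two_div hs, div_sqrt, two_mul]

theorem strictAntiOn_secantSum (hs : 2 < s) :
    StrictAntiOn (secantSum s) (Icc 0 (arccos (2 / s))) := by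
  have hmono := strictMonoOn_normC (two_pos.trans hs)
  have hsub : Icc 0 (arccos (2 / s)) ⊆ Icc 0 π := Icc_subset_Icc_right (arccos_le_pi _)
  refine strictAntiOn_add_div.comp_strictMonoOn (hmono.mono hsub) fun ψ hψ => ⟨normC_pos hs ψ, ?_⟩
  rw [← normC_arccos_two_div hs.le]
  exact hmono.monotoneOn (hsub hψ) (arccos_mem_Icc _) hψ.2

theorem strictMonoOn_secantSum (hs : 2 < s) :
    StrictMonoOn (secantSum s) (Icc (arccos (2 / s)) π) := by
  have hmono := strictMonoOn_normC (two_pos.trans hs)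
  have hsub : Icc (arccos (2 / s)) π ⊆ Icc 0 π := Icc_subset_Icc_left (arccos_nonneg _)
  have hpower : 0 < s ^ 2 / 4 - 1 := by nlinarith
  refine (strictMonoOn_add_div hpower).comp (hmono.mono hsub) fun ψ hψ => ?_
  rw [mem_Ici, ← normC_arccos_two_div hs.le]
  exact hmono.monotoneOn (arccos_mem_Icc _) (hsub hψ) hψ.1

theorem strictAntiOn_argC (hs : 2 < s) : StrictAntiOn (argC s) (Icc 0 (arccos (2 / s))) :=
  fun _ hx _ hy hxy => (argC_lt_argC_iff hs).2 (strictAntiOn_secantSum hs hx hy hxy)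

theorem strictMonoOn_argC (hs : 2 < s) : StrictMonoOn (argC s) (Icc (arccos (2 / s)) π) :=
  fun _ hx _ hy hxy => (argC_lt_argC_iff hs).2 (strictMonoOn_secantSum hs hx hy hxy)

theorem argC_arccos_two_div_lt (hs : 2 < s) (hψ : ψ ∈ Icc 0 π) (hne : ψ ≠ arccos (2 / s)) :
    argC s (arccos (2 / s)) < argC s ψ := by
  rcases hne.lt_or_gt with hlt | hgt
  · exact strictAntiOn_argC hs ⟨hψ.1, hlt.le⟩ (right_mem_Icc.2 (arccos_nonneg _)) hlt
  · exact strictMonoOn_argC hs (left_mem_Icc.2 (arccos_le_pi _)) ⟨hgt.le, hψ.2⟩ hgt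

theorem sqrt_one_sub_four_div_sq (hs : 0 < s) :
    √(1 - 4 / s ^ 2) = 2 * √(s ^ 2 / 4 - 1) / s := by
  have hfactor : 1 - 4 / s ^ 2 = (2 / s) ^ 2 * (s ^ 2 / 4 - 1) := by
    field_simp
    ring
  rw [hfactor, sqrt_mul (sq_nonneg _), sqrt_sq (div_pos two_pos hs).le]
  ring

theorem cos_argC_arccos_two_div (hs : 2 < s) :
    cos (argC s (arccos (2 / s))) = -√(1 - 4 / s ^ 2) := by
  have hs₀ : 0 < s := two_pos.trans hs
  rw [cos_argC_eq_neg_secantSum_div hs₀.ne' (normC_pos hs _).ne', secantSum_arccos_two_div hs.le,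
    sqrt_one_sub_four_div_sq hs₀]

theorem argC_arccos_two_div (hs : 2 < s) :
    argC s (arccos (2 / s)) = arccos (2 / s) + π / 2 := by
  have hψ := arccos_two_div_mem_Ioo hs
  refine injOn_cos (argC_mem_Icc s _) ⟨by linarith [hψ.1, pi_pos], by linarith [hψ.2]⟩ ?_
  rw [cos_argC_arccos_two_div hs, cos_add_pi_div_two, sin_arccos, div_pow]
  norm_num

theorem sqrt_lt_abs_cos_argC (hs : 2 < s) (hψ : ψ ∈ Icc 0 π) (hne : ψ ≠ arccos (2 / s)) :
    √(1 - 4 / s ^ 2) < |cos (argC s ψ)| := by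
  have hcos : cos (argC s ψ) < -√(1 - 4 / s ^ 2) := by
    rw [← cos_argC_arccos_two_div hs]
    exact strictAntiOn_cos (argC_mem_Icc s _) (argC_mem_Icc s ψ) (argC_arccos_two_div_lt hs hψ hne)
  exact (lt_neg_of_lt_neg hcos).trans_le (neg_le_abs _)

end Circle

/-- behaviour of `ψ ↦ Arg(C_s(ψ))` for `s > 2`, with
`ψ_max = arccos(2/s) ∈ (0,π/2)`: endpoint values `π`, strict monotonicity on the
two subintervals, the value `ψ_max + π/2` at `ψ_max`, whose cosine is
`−sqrt(1 − 4/s²)`, and minimality of `|cos(Arg(C_s(ψ)))|` exactly at `ψ_max`. -/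
theorem stmt_12 (s : ℝ) (hs : 2 < s) :
    Real.arccos (2 / s) ∈ Set.Ioo 0 (π / 2) ∧
    argC s 0 = π ∧ argC s π = π ∧
    StrictAntiOn (argC s) (Set.Icc 0 (Real.arccos (2 / s))) ∧
    StrictMonoOn (argC s) (Set.Icc (Real.arccos (2 / s)) π) ∧
    argC s (Real.arccos (2 / s)) = Real.arccos (2 / s) + π / 2 ∧
    Real.cos (argC s (Real.arccos (2 / s))) = -Real.sqrt (1 - 4 / s ^ 2) ∧
    (∀ ψ ∈ Set.Icc (0 : ℝ) π, Real.sqrt (1 - 4 / s ^ 2) ≤ |Real.cos (argC s ψ)|) ∧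
    (∀ ψ ∈ Set.Icc (0 : ℝ) π,
      |Real.cos (argC s ψ)| = Real.sqrt (1 - 4 / s ^ 2) → ψ = Real.arccos (2 / s)) := by
  refine ⟨arccos_two_div_mem_Ioo hs, argC_zero hs, argC_pi (by linarith), strictAntiOn_argC hs,
    strictMonoOn_argC hs, argC_arccos_two_div hs, cos_argC_arccos_two_div hs, ?_, ?_⟩
  · intro ψ hψ
    obtain rfl | hne := eq_or_ne ψ (Real.arccos (2 / s))
    · rw [cos_argC_arccos_two_div hs, abs_neg]
      exact le_abs_self _
    · exact (sqrt_lt_abs_cos_argC hs hψ hne).le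
  · intro ψ hψ heq
    by_contra hne
    exact (sqrt_lt_abs_cos_argC hs hψ hne).ne' heq
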